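/- Let n ≥ 1 and let f : ℝⁿ → ℝ be a nonnegative, continuous, compactly supported function with ∫_{ℝⁿ} f dx = 1. Let u(t,x) = ∫_{ℝⁿ} (4πt)^{-n/2} exp(-‖x-y‖²/(4t)) f(y) dy be the heat semigroup solution with initial datum f. Then the Shannon entropy power t ↦ N(u(t)) = exp((2/n) H(u(t))) is concave on (0,∞); that is, for all 0 < t₁ ≤ t₂ and λ ∈ [0,1], N(u(λt₁+(1-λ)t₂)) ≥ λ N(u(t₁)) + (1-λ) N(u(t₂)) (equivalently, d²N/dt² ≤ 0 on (0,∞)). -/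

import Mathlib

open Real MeasureTheory

/-- The heat semigroup solution on `ℝⁿ` with initial datum `f`. -/
noncomputable def heatSol (n : ℕ) (f : EuclideanSpace ℝ (Fin n) → ℝ)
    (t : ℝ) (x : EuclideanSpace ℝ (Fin n)) : ℝ :=
  ∫ y, (4 * π * t) ^ (-(n : ℝ) / 2) * Real.exp (-‖x - y‖ ^ 2 / (4 * t)) * f y

/-- The Boltzmann–Shannon entropy of the heat solution at time `t`. -/
noncomputable def shannonEntropy (n : ℕ) (f : EuclideanSpace ℝ (Fin n) → ℝ) (t : ℝ) : ℝ :=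
  -∫ x, heatSol n f t x * Real.log (heatSol n f t x)

/-- The Shannon entropy power of the heat solution at time `t`. -/
noncomputable def entropyPower (n : ℕ) (f : EuclideanSpace ℝ (Fin n) → ℝ) (t : ℝ) : ℝ :=
  Real.exp ((2 / (n : ℝ)) * shannonEntropy n f t)

/-! By de Bruijn's identity the entropy `H` of the heat flow has derivative the Fisher information
`I`. Cauchy–Schwarz, applied to the score of a convolution, gives the Blachman–Stam inequality
`I (u ⋆ p) ≤ α² I u + β² I p` for `α + β = 1`. Taking for `p` the heat kernel at time `s`, whose
Fisher information is `n / (2 s)`, and optimizing over `α`, one gets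
`1 / I (t + s) ≥ 1 / I t + 2 s / n`. Integrating this, `N = exp (2 H / n)` satisfies
`N (t + s) ≤ N t (1 + (2 / n) s I t)`, so the derivative `(2 / n) N I` of `N` is nonincreasing. -/

open Set Module InnerProductSpace
open scoped Topology Convolution

section DifferentialInequality

variable {H I : ℝ → ℝ} {c : ℝ}

theorem exp_mul_add_le_of_hasDerivAt (hc : 0 ≤ c) (hH : ∀ t, 0 < t → HasDerivAt H (I t) t)
    (hI : ∀ t, 0 < t → 0 ≤ I t)
    (hIle : ∀ t s, 0 < t → 0 < s → I (t + s) ≤ I t / (1 + c * s * I t))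
    {t s : ℝ} (ht : 0 < t) (hs : 0 ≤ s) :
    exp (c * H (t + s)) ≤ exp (c * H t) * (1 + c * s * I t) := by
  have hIt := hI t ht
  have hpos : ∀ r, 0 ≤ r → 0 < 1 + c * r * I t := fun r hr => by positivity
  have hderiv : ∀ r, 0 ≤ r → HasDerivAt (fun r => c * H (t + r) - log (1 + c * r * I t))
      (c * I (t + r) - c * I t / (1 + c * r * I t)) r := fun r hr => by
    have hlin : HasDerivAt (fun r => 1 + c * r * I t) (c * I t) r := by
      simpa using (((hasDerivAt_id r).const_mul c).mul_const (I t)).const_add 1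
    exact (((hH (t + r) (by linarith)).comp_const_add t r).const_mul c).sub
      (hlin.log (hpos r hr).ne')
  have hanti : AntitoneOn (fun r => c * H (t + r) - log (1 + c * r * I t)) (Ici 0) := by
    refine antitoneOn_of_hasDerivWithinAt_nonpos (convex_Ici 0)
      (fun r hr => (hderiv r hr).continuousAt.continuousWithinAt)
      (fun r hr => (hderiv r (interior_subset hr)).hasDerivWithinAt) fun r hr => ?_
    rw [interior_Ici] at hr
    rw [sub_nonpos, mul_div_assoc]
    exact mul_le_mul_of_nonneg_left (hIle t r ht hr) hc
  have hle : c * H (t + s) - log (1 + c * s * I t) ≤ c * H t := by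
    simpa using hanti self_mem_Ici hs hs
  calc exp (c * H (t + s)) ≤ exp (c * H t + log (1 + c * s * I t)) := exp_le_exp.2 (by linarith)
    _ = exp (c * H t) * (1 + c * s * I t) := by rw [exp_add, exp_log (hpos s hs)]

theorem concaveOn_exp_mul_of_hasDerivAt (hc : 0 ≤ c) (hH : ∀ t, 0 < t → HasDerivAt H (I t) t)
    (hI : ∀ t, 0 < t → 0 ≤ I t)
    (hIle : ∀ t s, 0 < t → 0 < s → I (t + s) ≤ I t / (1 + c * s * I t)) :
    ConcaveOn ℝ (Ioi 0) fun t => exp (c * H t) := by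
  have hderiv : ∀ t, 0 < t →
      HasDerivAt (fun t => exp (c * H t)) (exp (c * H t) * (c * I t)) t :=
    fun t ht => ((hH t ht).const_mul c).exp
  refine AntitoneOn.concaveOn_of_deriv (convex_Ioi 0)
    (fun t ht => (hderiv t ht).continuousAt.continuousWithinAt) ?_ ?_ <;> rw [interior_Ioi]
  · exact fun t ht => (hderiv t ht).differentiableAt.differentiableWithinAt
  rintro t (ht : 0 < t) r (hr : 0 < r) htr
  rcases htr.eq_or_lt with rfl | htr
  · rfl
  obtain ⟨s, hs, rfl⟩ : ∃ s, 0 < s ∧ r = t + s := ⟨r - t, sub_pos.2 htr, by ring⟩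
  have hIt := hI t ht
  have : 0 < 1 + c * s * I t := by positivity
  rw [(hderiv t ht).deriv, (hderiv _ hr).deriv]
  calc exp (c * H (t + s)) * (c * I (t + s))
      ≤ exp (c * H t) * (1 + c * s * I t) * (c * (I t / (1 + c * s * I t))) := by
        have := hI _ hr
        gcongr
        · exact exp_mul_add_le_of_hasDerivAt hc hH hI hIle ht hs.le
        · exact hIle t s ht hs
    _ = exp (c * H t) * (c * I t) := by field_simp

end DifferentialInequality

section IntegralInequalities

variable {α : Type*} [MeasurableSpace α] {μ : Measure α}

theorem sq_integral_div_integral_le {g w : α → ℝ}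
    (hw : ∀ x, 0 ≤ w x) (hgw : ∀ x, w x = 0 → g x = 0) (hg : Integrable g μ) (hwi : Integrable w μ)
    (hgwi : Integrable (fun x => g x ^ 2 / w x) μ) :
    (∫ x, g x ∂μ) ^ 2 / ∫ x, w x ∂μ ≤ ∫ x, g x ^ 2 / w x ∂μ := by
  rcases (integral_nonneg (μ := μ) (f := w) hw).eq_or_lt' with h0 | hpos
  · rw [h0, div_zero]
    exact integral_nonneg fun x => div_nonneg (sq_nonneg _) (hw x)
  set k := (∫ x, g x ∂μ) / ∫ x, w x ∂μ with hk
  have hpt : ∀ x, 2 * k * g x - k ^ 2 * w x ≤ g x ^ 2 / w x := fun x => by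
    rcases (hw x).eq_or_lt' with hx | hx
    · simp [hx, hgw x hx]
    · rw [le_div_iff₀ hx]
      nlinarith [sq_nonneg (g x - k * w x)]
  calc (∫ x, g x ∂μ) ^ 2 / ∫ x, w x ∂μ
      = 2 * k * ∫ x, g x ∂μ - k ^ 2 * ∫ x, w x ∂μ := by rw [hk]; field_simp; ring
    _ = ∫ x, (2 * k * g x - k ^ 2 * w x) ∂μ := by
        rw [integral_sub (hg.const_mul _) (hwi.const_mul _), integral_const_mul,
          integral_const_mul]
    _ ≤ ∫ x, g x ^ 2 / w x ∂μ :=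
        integral_mono ((hg.const_mul _).sub (hwi.const_mul _)) hgwi hpt

theorem integral_mul_log_le_log_integral_mul {f g : α → ℝ} (hf : ∀ x, 0 ≤ f x)
    (hf1 : ∫ x, f x ∂μ = 1) (hg : ∀ x, 0 < g x)
    (hfg : Integrable (fun x => f x * g x) μ) (hpos : 0 < ∫ x, f x * g x ∂μ)
    (hlog : Integrable (fun x => f x * log (g x)) μ) :
    ∫ x, f x * log (g x) ∂μ ≤ log (∫ x, f x * g x ∂μ) := by
  have hfi : Integrable f μ := integrable_of_integral_eq_one hf1
  set m := ∫ x, f x * g x ∂μ with hm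
  have htangent : ∀ x, f x * log (g x) ≤ f x * (log m - 1) + f x * g x / m := fun x => by
    have h := log_le_sub_one_of_pos (div_pos (hg x) hpos)
    rw [log_div (hg x).ne' hpos.ne'] at h
    calc f x * log (g x) ≤ f x * (log m - 1 + g x / m) :=
          mul_le_mul_of_nonneg_left (by linarith) (hf x)
      _ = _ := by ring
  calc ∫ x, f x * log (g x) ∂μ ≤ ∫ x, (f x * (log m - 1) + f x * g x / m) ∂μ :=
        integral_mono hlog ((hfi.mul_const _).add (hfg.div_const _)) htangent
    _ = log m := by
        rw [integral_add (hfi.mul_const _) (hfg.div_const _), integral_mul_const, integral_div,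
          ← hm, hf1, div_self hpos.ne']
        ring

end IntegralInequalities

theorem one_add_norm_add_sq_le {F : Type*} [SeminormedAddCommGroup F] (x y : F) :
    1 + ‖x + y‖ ^ 2 ≤ 2 * ((1 + ‖x‖ ^ 2) * (1 + ‖y‖ ^ 2)) := by
  have h := pow_le_pow_left₀ (norm_nonneg _) (norm_add_le x y) 2
  nlinarith [sq_nonneg (‖x‖ - ‖y‖), mul_nonneg (sq_nonneg ‖x‖) (sq_nonneg ‖y‖)]

variable {E : Type*} [NormedAddCommGroup E] [InnerProductSpace ℝ E] {e : E} {f u p : E → ℝ}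

section Convolution

variable [FiniteDimensional ℝ E] [MeasurableSpace E] [BorelSpace E]

theorem convolution_apply (f K : E → ℝ) (x : E) : (f ⋆ K) x = ∫ y, f y * K (x - y) := rfl

theorem integrable_mul_comp_sub_left {K : E → ℝ} {C : ℝ} (hf : Integrable f) (hK : Continuous K)
    (hC : ∀ z, |K z| ≤ C) (x : E) : Integrable fun y => f y * K (x - y) :=
  hf.mul_bdd (hK.comp (continuous_sub_left x)).aestronglyMeasurable (ae_of_all _ fun _ => hC _)

theorem continuous_convolution {K : E → ℝ} {C : ℝ} (hf : Integrable f) (hK : Continuous K)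
    (hC : ∀ z, |K z| ≤ C) : Continuous (f ⋆ K) :=
  BddAbove.continuous_convolution_right_of_integrable _
    ⟨C, by rintro _ ⟨z, rfl⟩; exact hC z⟩ hf hK

theorem convolution_nonneg {K : E → ℝ} (hf : ∀ x, 0 ≤ f x) (hK : ∀ x, 0 ≤ K x) (x : E) :
    0 ≤ (f ⋆ K) x :=
  integral_nonneg fun _ => mul_nonneg (hf _) (hK _)

theorem convolution_pos {K : E → ℝ} {C : ℝ} (hf : ∀ x, 0 ≤ f x) (hf1 : 0 < ∫ x, f x)
    (hK : ∀ x, 0 < K x) (hKc : Continuous K) (hC : ∀ z, |K z| ≤ C) (x : E) : 0 < (f ⋆ K) x := by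
  have hfi : Integrable f := .of_integral_ne_zero hf1.ne'
  have hsupp : Function.support (fun y => f y * K (x - y)) = Function.support f := by
    ext y
    simp [(hK (x - y)).ne']
  rw [convolution_apply, integral_pos_iff_support_of_nonneg
    (fun y => mul_nonneg (hf y) (hK _).le) (integrable_mul_comp_sub_left hfi hKc hC x), hsupp,
    ← integral_pos_iff_support_of_nonneg hf hfi]
  exact hf1

theorem abs_convolution_le {K : E → ℝ} {C : ℝ} (hf : ∀ x, 0 ≤ f x) (hf1 : ∫ x, f x = 1)
    (hC : ∀ z, |K z| ≤ C) (x : E) : |(f ⋆ K) x| ≤ C := by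
  have hfi : Integrable f := integrable_of_integral_eq_one hf1
  calc |∫ y, f y * K (x - y)| ≤ ∫ y, f y * C :=
        norm_integral_le_of_norm_le (f := fun y => f y * K (x - y)) (hfi.mul_const C) <|
          ae_of_all _ fun y => by
          rw [norm_mul, norm_of_nonneg (hf y)]
          exact mul_le_mul_of_nonneg_left (hC _) (hf y)
    _ = C := by rw [integral_mul_const, hf1, one_mul]

theorem hasDerivAt_integral_mul_comp_sub {K K' : ℝ → E → ℝ} {S : Set ℝ} {s₀ C C' : ℝ}
    (hf : Integrable f) (hS : S ∈ 𝓝 s₀) (hK : ∀ s ∈ S, Continuous (K s)) (hC : ∀ z, |K s₀ z| ≤ C)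
    (hK' : Continuous (K' s₀)) (hC' : ∀ s ∈ S, ∀ z, |K' s z| ≤ C')
    (hderiv : ∀ s ∈ S, ∀ z, HasDerivAt (fun s => K s z) (K' s z) s) (x : E) :
    HasDerivAt (fun s => (f ⋆ K s) x) ((f ⋆ K' s₀) x) s₀ := by
  have hmeas : ∀ {g : E → ℝ}, Continuous g → AEStronglyMeasurable fun y => f y * g (x - y) :=
    fun hg => hf.aestronglyMeasurable.mul (hg.comp (continuous_sub_left x)).aestronglyMeasurable
  refine (hasDerivAt_integral_of_dominated_loc_of_deriv_le (bound := fun y => |f y| * C') hS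
    (Filter.eventually_of_mem hS fun s hs => hmeas (hK s hs))
    (integrable_mul_comp_sub_left hf (hK s₀ (mem_of_mem_nhds hS)) hC x) (hmeas hK')
    (ae_of_all _ fun y s hs => ?_) (hf.abs.mul_const C')
    (ae_of_all _ fun y s hs => (hderiv s hs (x - y)).const_mul (f y))).2
  rw [norm_mul]
  exact mul_le_mul_of_nonneg_left (hC' s hs _) (abs_nonneg _)

theorem hasLineDerivAt_convolution {p p' : E → ℝ} {C C' : ℝ} (hf : Integrable f)
    (hp : Continuous p) (hC : ∀ z, |p z| ≤ C) (hp' : Continuous p') (hC' : ∀ z, |p' z| ≤ C')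
    (hderiv : ∀ z, HasLineDerivAt ℝ p (p' z) z e) (x : E) :
    HasLineDerivAt ℝ (f ⋆ p) ((f ⋆ p') x) x e := by
  have hshift : ∀ s z, HasDerivAt (fun s : ℝ => p (z + s • e)) (p' (z + s • e)) s := fun s z => by
    simpa [HasLineDerivAt, Function.comp_def, add_assoc, ← add_smul] using
      (hderiv (z + s • e)).scomp_of_eq s ((hasDerivAt_id s).sub_const s) (by simp)
  have key := hasDerivAt_integral_mul_comp_sub (K := fun s z => p (z + s • e))
    (K' := fun s z => p' (z + s • e)) (s₀ := 0) hf Filter.univ_mem (fun s _ => by fun_prop)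
    (fun z => hC _) (by fun_prop) (fun s _ z => hC' _) (fun s _ z => hshift s z) x
  simpa [HasLineDerivAt, convolution_apply, sub_add_eq_add_sub] using key

theorem abs_convolution_le_mul_convolution {K : E → ℝ} {C M : ℝ} (hfi : Integrable f)
    (hf : ∀ x, 0 ≤ f x) (hp : Continuous p) (hM : ∀ z, |p z| ≤ M)
    (hK : ∀ z, |K z| ≤ C * p z) (x : E) : |(f ⋆ K) x| ≤ C * (f ⋆ p) x := by
  rw [convolution_apply, convolution_apply, ← integral_const_mul]
  refine norm_integral_le_of_norm_le (f := fun y => f y * K (x - y))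
    ((integrable_mul_comp_sub_left hfi hp hM x).const_mul C) <| ae_of_all _ fun y => ?_
  rw [norm_mul, norm_of_nonneg (hf y), mul_left_comm]
  exact mul_le_mul_of_nonneg_left (hK _) (hf y)

theorem integrable_one_add_norm_sq_mul_convolution (hf : ∀ x, 0 ≤ f x) (hp : ∀ x, 0 ≤ p x)
    (hfi : Integrable f) (hpi : Integrable p) (hf2 : Integrable fun x => (1 + ‖x‖ ^ 2) * f x)
    (hp2 : Integrable fun x => (1 + ‖x‖ ^ 2) * p x) :
    Integrable fun x => (1 + ‖x‖ ^ 2) * (f ⋆ p) x := by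
  refine ((hf2.integrable_convolution (.lsmul ℝ ℝ) hp2).const_mul 2).mono' (.mul (by fun_prop)
    (hfi.integrable_convolution (.lsmul ℝ ℝ) hpi).aestronglyMeasurable) ?_
  filter_upwards [hf2.ae_convolution_exists (.lsmul ℝ ℝ) hp2] with x hx
  have hnonneg : ∀ y, 0 ≤ f y * p (x - y) := fun y => mul_nonneg (hf y) (hp _)
  rw [norm_of_nonneg (mul_nonneg (by positivity) (convolution_nonneg hf hp x)), convolution_apply,
    convolution_apply, ← integral_const_mul, ← integral_const_mul]
  refine integral_mono_of_nonneg (ae_of_all _ fun y => mul_nonneg (by positivity) (hnonneg y))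
    (hx.const_mul 2) (ae_of_all _ fun y => ?_)
  have h := one_add_norm_add_sq_le y (x - y)
  rw [add_sub_cancel] at h
  calc (1 + ‖x‖ ^ 2) * (f y * p (x - y))
      ≤ 2 * ((1 + ‖y‖ ^ 2) * (1 + ‖x - y‖ ^ 2)) * (f y * p (x - y)) :=
        mul_le_mul_of_nonneg_right h (hnonneg y)
    _ = 2 * ((1 + ‖y‖ ^ 2) * f y * ((1 + ‖x - y‖ ^ 2) * p (x - y))) := by ring

theorem neg_log_convolution_le {C M : ℝ} (hf : ∀ x, 0 ≤ f x) (hf1 : ∫ x, f x = 1)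
    (hf2 : Integrable fun x => (1 + ‖x‖ ^ 2) * f x) (hp : ∀ z, 0 < p z) (hpc : Continuous p)
    (hM : ∀ z, |p z| ≤ M) (hC : ∀ z, |log (p z)| ≤ C * (1 + ‖z‖ ^ 2)) (x : E) :
    -log ((f ⋆ p) x) ≤ 2 * C * (∫ y, (1 + ‖y‖ ^ 2) * f y) * (1 + ‖x‖ ^ 2) := by
  have hfi : Integrable f := integrable_of_integral_eq_one hf1
  have hC0 : 0 ≤ C := by simpa using (abs_nonneg _).trans (hC 0)
  have hpt : ∀ y, ‖f y * log (p (x - y))‖ ≤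
      2 * C * (1 + ‖x‖ ^ 2) * ((1 + ‖y‖ ^ 2) * f y) := fun y => by
    have hxy := one_add_norm_add_sq_le x (-y)
    rw [← sub_eq_add_neg, norm_neg] at hxy
    rw [norm_mul, norm_of_nonneg (hf y), norm_eq_abs]
    calc f y * |log (p (x - y))| ≤ f y * (C * (2 * ((1 + ‖x‖ ^ 2) * (1 + ‖y‖ ^ 2)))) :=
          mul_le_mul_of_nonneg_left ((hC _).trans (by gcongr)) (hf y)
      _ = _ := by ring
  have hlog : Integrable fun y => f y * log (p (x - y)) :=
    (hf2.const_mul _).mono' (hfi.aestronglyMeasurable.mul ((hpc.comp (continuous_sub_left x)).log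
      fun y => (hp _).ne').aestronglyMeasurable) (ae_of_all _ hpt)
  calc -log ((f ⋆ p) x) ≤ -∫ y, f y * log (p (x - y)) :=
        neg_le_neg <| integral_mul_log_le_log_integral_mul hf hf1 (fun y => hp _)
          (integrable_mul_comp_sub_left hfi hpc hM x)
          (convolution_pos hf (hf1 ▸ one_pos) hp hpc hM x) hlog
    _ ≤ ∫ y, 2 * C * (1 + ‖x‖ ^ 2) * ((1 + ‖y‖ ^ 2) * f y) :=
        (neg_le_abs _).trans (norm_integral_le_of_norm_le (hf2.const_mul _) (ae_of_all _ hpt))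
    _ = _ := by rw [integral_const_mul]; ring

end Convolution

section LineDeriv

variable [FiniteDimensional ℝ E] [MeasurableSpace E] [BorelSpace E]

theorem integral_mul_lineDeriv_eq_neg {g g' h h' : E → ℝ}
    (hg : ∀ x, HasLineDerivAt ℝ g (g' x) x e) (hh : ∀ x, HasLineDerivAt ℝ h (h' x) x e)
    (hgh : Integrable fun x => g x * h x) (hg'h : Integrable fun x => g' x * h x)
    (hgh' : Integrable fun x => g x * h' x) :
    ∫ x, g x * h' x = -∫ x, g' x * h x :=
  integral_bilinear_hasLineDerivAt_right_eq_neg_left_of_integrable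
    (B := ContinuousLinearMap.mul ℝ ℝ) hg'h hgh' hgh (fun x _ => hg x) (fun x _ => hh x)

theorem integral_lineDeriv_eq_zero {h h' : E → ℝ} (hh : ∀ x, HasLineDerivAt ℝ h (h' x) x e)
    (hi : Integrable h) (hi' : Integrable h') : ∫ x, h' x = 0 := by
  simpa using integral_mul_lineDeriv_eq_neg (g := fun _ => 1) (g' := fun _ => 0)
    (fun x => by simpa [HasLineDerivAt] using hasDerivAt_const (0 : ℝ) (1 : ℝ)) hh
    (by simpa using hi) (by simp) (by simpa using hi')

theorem convolution_lineDeriv_comm {g g' h h' : E → ℝ} {B B' : ℝ} (hgi : Integrable g)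
    (hgi' : Integrable g') (hg : ∀ x, HasLineDerivAt ℝ g (g' x) x e)
    (hh : ∀ x, HasLineDerivAt ℝ h (h' x) x e) (hhc : Continuous h) (hB : ∀ x, |h x| ≤ B)
    (hhc' : Continuous h') (hB' : ∀ x, |h' x| ≤ B') :
    g' ⋆ h = g ⋆ h' := by
  ext x
  have hneg : ∀ y, HasLineDerivAt ℝ (fun y => h (x - y)) (-h' (x - y)) y e := fun y => by
    have := (hh (x - y)).scomp_of_eq 0 (hasDerivAt_neg (0 : ℝ)) (by simp)
    simpa [HasLineDerivAt, Function.comp_def, sub_add_eq_sub_sub, ← sub_eq_add_neg] using this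
  have key := integral_mul_lineDeriv_eq_neg hg hneg
    (integrable_mul_comp_sub_left hgi hhc hB x) (integrable_mul_comp_sub_left hgi' hhc hB x)
    (by simpa using (integrable_mul_comp_sub_left hgi hhc' hB' x).neg)
  simpa [convolution_apply, integral_neg] using key.symm

end LineDeriv

section FisherInformation

variable [FiniteDimensional ℝ E] [MeasurableSpace E] [BorelSpace E]

/-- The Fisher information of the density `u` in the direction `e`. The full Fisher information is
its sum over an orthonormal basis. -/
noncomputable def fisherInfo (e : E) (u : E → ℝ) : ℝ :=
  ∫ x, lineDeriv ℝ u x e ^ 2 / u x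

/-- Positive bounded continuous probability densities with a bounded continuous integrable
derivative and finite Fisher information in the direction `e`: a class which is stable under
convolution and contains the heat kernels. -/
structure IsRegularDensity (e : E) (u : E → ℝ) : Prop where
  pos : ∀ x, 0 < u x
  integral_eq_one : ∫ x, u x = 1
  continuous : Continuous u
  bounded : ∃ C, ∀ x, |u x| ≤ C
  lineDifferentiable : ∀ x, LineDifferentiableAt ℝ u x e
  continuous_lineDeriv : Continuous fun x => lineDeriv ℝ u x e
  bounded_lineDeriv : ∃ C, ∀ x, |lineDeriv ℝ u x e| ≤ C
  integrable_lineDeriv : Integrable fun x => lineDeriv ℝ u x e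
  integrable_sq_lineDeriv_div : Integrable fun x => lineDeriv ℝ u x e ^ 2 / u x

theorem fisherInfo_nonneg (hu : ∀ x, 0 ≤ u x) : 0 ≤ fisherInfo e u :=
  integral_nonneg fun x => div_nonneg (sq_nonneg _) (hu x)

theorem sq_add_convolution_div_le {v a : E → ℝ} {x : E} (hu : ∀ x, 0 ≤ u x)
    (huv : ∀ x, u x = 0 → v x = 0) (hp : ∀ x, 0 < p x)
    (hup : Integrable fun y => u y * p (x - y)) (hvp : Integrable fun y => v y * p (x - y))
    (hua : Integrable fun y => u y * a (x - y)) (hva : Integrable fun y => v y * a (x - y))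
    (hvup : Integrable fun y => v y ^ 2 / u y * p (x - y))
    (huap : Integrable fun y => u y * (a (x - y) ^ 2 / p (x - y))) (α β : ℝ) :
    (α * (v ⋆ p) x + β * (u ⋆ a) x) ^ 2 / (u ⋆ p) x ≤
      α ^ 2 * ((fun z => v z ^ 2 / u z) ⋆ p) x + 2 * α * β * (v ⋆ a) x +
        β ^ 2 * (u ⋆ fun z => a z ^ 2 / p z) x := by
  have hexpand : ∀ y, (α * (v y * p (x - y)) + β * (u y * a (x - y))) ^ 2 / (u y * p (x - y)) =
      α ^ 2 * (v y ^ 2 / u y * p (x - y)) + 2 * α * β * (v y * a (x - y)) +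
        β ^ 2 * (u y * (a (x - y) ^ 2 / p (x - y))) := fun y => by
    have := (hp (x - y)).ne'
    rcases eq_or_ne (u y) 0 with hy | hy
    · simp [hy, huv y hy]
    · field_simp
      ring
  have h₁ : Integrable fun y => α ^ 2 * (v y ^ 2 / u y * p (x - y)) +
      2 * α * β * (v y * a (x - y)) := (hvup.const_mul _).add (hva.const_mul _)
  have h₂ := huap.const_mul (β ^ 2)
  simp only [convolution_apply]
  rw [← integral_const_mul, ← integral_const_mul, ← integral_const_mul, ← integral_const_mul,
    ← integral_const_mul, ← integral_add (hvp.const_mul _) (hua.const_mul _),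
    ← integral_add (hvup.const_mul _) (hva.const_mul _), ← integral_add h₁ h₂]
  simp only [← hexpand]
  refine sq_integral_div_integral_le (fun y => mul_nonneg (hu y) (hp _).le) (fun y hy => ?_)
    ((hvp.const_mul α).add (hua.const_mul β)) hup (by simpa only [hexpand] using h₁.fun_add h₂)
  have hy : u y = 0 := (mul_eq_zero_iff_right (hp (x - y)).ne').1 hy
  simp [hy, huv y hy]

namespace IsRegularDensity

theorem integrable (hu : IsRegularDensity e u) : Integrable u :=
  integrable_of_integral_eq_one hu.integral_eq_one

theorem hasLineDerivAt (hu : IsRegularDensity e u) (x : E) :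
    HasLineDerivAt ℝ u (lineDeriv ℝ u x e) x e :=
  (hu.lineDifferentiable x).hasLineDerivAt

theorem integral_lineDeriv (hu : IsRegularDensity e u) : ∫ x, lineDeriv ℝ u x e = 0 :=
  integral_lineDeriv_eq_zero hu.hasLineDerivAt hu.integrable hu.integrable_lineDeriv

theorem hasLineDerivAt_convolution (hp : IsRegularDensity e p) (hf : Integrable f) (x : E) :
    HasLineDerivAt ℝ (f ⋆ p) ((f ⋆ fun z => lineDeriv ℝ p z e) x) x e :=
  let ⟨_, hC⟩ := hp.bounded
  let ⟨_, hC'⟩ := hp.bounded_lineDeriv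
  _root_.hasLineDerivAt_convolution hf hp.continuous hC hp.continuous_lineDeriv hC'
    hp.hasLineDerivAt x

theorem lineDeriv_convolution (hp : IsRegularDensity e p) (hf : Integrable f) (x : E) :
    lineDeriv ℝ (f ⋆ p) x e = (f ⋆ fun z => lineDeriv ℝ p z e) x :=
  (hp.hasLineDerivAt_convolution hf x).lineDeriv

theorem convolution (hp : IsRegularDensity e p) (hf : ∀ x, 0 ≤ f x) (hf1 : ∫ x, f x = 1) :
    IsRegularDensity e (f ⋆ p) := by
  have hfi : Integrable f := integrable_of_integral_eq_one hf1
  obtain ⟨C, hC⟩ := hp.bounded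
  obtain ⟨C', hC'⟩ := hp.bounded_lineDeriv
  have hderiv : (fun x => lineDeriv ℝ (f ⋆ p) x e) = f ⋆ fun z => lineDeriv ℝ p z e :=
    funext fun x => hp.lineDeriv_convolution hfi x
  have hpos : ∀ x, 0 < (f ⋆ p) x :=
    convolution_pos hf (hf1 ▸ one_pos) hp.pos hp.continuous hC
  have hcont : Continuous (f ⋆ p) := continuous_convolution hfi hp.continuous hC
  have hcont' : Continuous fun x => lineDeriv ℝ (f ⋆ p) x e :=
    hderiv ▸ continuous_convolution hfi hp.continuous_lineDeriv hC'
  refine ⟨hpos, ?_, hcont, ⟨C, abs_convolution_le hf hf1 hC⟩,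
    fun x => (hp.hasLineDerivAt_convolution hfi x).lineDifferentiableAt, hcont', ⟨C', fun x => ?_⟩,
    hderiv ▸ hfi.integrable_convolution _ hp.integrable_lineDeriv,
    (hfi.integrable_convolution (.lsmul ℝ ℝ) hp.integrable_sq_lineDeriv_div).mono'
      ((hcont'.pow 2).div₀ hcont fun x => (hpos x).ne').aestronglyMeasurable ?_⟩
  · rw [integral_convolution _ hfi hp.integrable]
    simp [hf1, hp.integral_eq_one]
  · rw [hp.lineDeriv_convolution hfi]
    exact abs_convolution_le hf hf1 hC' x
  · filter_upwards [hfi.ae_convolution_exists (.lsmul ℝ ℝ) hp.integrable_sq_lineDeriv_div]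
      with x hx
    rw [norm_of_nonneg (div_nonneg (sq_nonneg _) (hpos x).le), hp.lineDeriv_convolution hfi]
    simpa [convolution_apply] using sq_add_convolution_div_le (v := 0)
      (a := fun z => lineDeriv ℝ p z e) hf (by simp) hp.pos
      (integrable_mul_comp_sub_left hfi hp.continuous hC x) (by simp)
      (integrable_mul_comp_sub_left hfi hp.continuous_lineDeriv hC' x) (by simp) (by simp) hx 0 1

theorem lineDeriv_convolution_comm (hu : IsRegularDensity e u) (hp : IsRegularDensity e p) :
    (fun z => lineDeriv ℝ u z e) ⋆ p = u ⋆ fun z => lineDeriv ℝ p z e :=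
  let ⟨_, hC⟩ := hp.bounded
  let ⟨_, hC'⟩ := hp.bounded_lineDeriv
  convolution_lineDeriv_comm hu.integrable hu.integrable_lineDeriv hu.hasLineDerivAt
    hp.hasLineDerivAt hp.continuous hC hp.continuous_lineDeriv hC'

theorem sq_lineDeriv_convolution_div_ae_le (hu : IsRegularDensity e u) (hp : IsRegularDensity e p)
    {α β : ℝ} (hαβ : α + β = 1) :
    ∀ᵐ x, lineDeriv ℝ (u ⋆ p) x e ^ 2 / (u ⋆ p) x ≤
      α ^ 2 * ((fun z => lineDeriv ℝ u z e ^ 2 / u z) ⋆ p) x +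
        2 * α * β * ((fun z => lineDeriv ℝ u z e) ⋆ fun z => lineDeriv ℝ p z e) x +
        β ^ 2 * (u ⋆ fun z => lineDeriv ℝ p z e ^ 2 / p z) x := by
  obtain ⟨C, hC⟩ := hp.bounded
  obtain ⟨C', hC'⟩ := hp.bounded_lineDeriv
  filter_upwards [hu.integrable.ae_convolution_exists (.lsmul ℝ ℝ) hp.integrable_sq_lineDeriv_div]
    with x hx
  have hderiv : lineDeriv ℝ (u ⋆ p) x e = α * ((fun z => lineDeriv ℝ u z e) ⋆ p) x +
      β * (u ⋆ fun z => lineDeriv ℝ p z e) x := by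
    rw [hu.lineDeriv_convolution_comm hp, ← add_mul, hαβ, one_mul,
      hp.lineDeriv_convolution hu.integrable]
  rw [hderiv]
  exact sq_add_convolution_div_le (a := fun z => lineDeriv ℝ p z e) (fun y => (hu.pos y).le)
    (fun y hy => absurd hy (hu.pos y).ne') hp.pos
    (integrable_mul_comp_sub_left hu.integrable hp.continuous hC x)
    (integrable_mul_comp_sub_left hu.integrable_lineDeriv hp.continuous hC x)
    (integrable_mul_comp_sub_left hu.integrable hp.continuous_lineDeriv hC' x)
    (integrable_mul_comp_sub_left hu.integrable_lineDeriv hp.continuous_lineDeriv hC' x)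
    (integrable_mul_comp_sub_left hu.integrable_sq_lineDeriv_div hp.continuous hC x) hx α β

end IsRegularDensity

theorem fisherInfo_convolution_le (hu : IsRegularDensity e u) (hp : IsRegularDensity e p)
    {α β : ℝ} (hαβ : α + β = 1) :
    fisherInfo e (u ⋆ p) ≤ α ^ 2 * fisherInfo e u + β ^ 2 * fisherInfo e p := by
  have hconv : ∀ {g h : E → ℝ}, Integrable g → Integrable h → ∀ c : ℝ,
      Integrable fun x => c * (g ⋆ h) x := fun hg hh c =>
    (hg.integrable_convolution (.lsmul ℝ ℝ) hh).const_mul c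
  have h₁₂ := (hconv hu.integrable_sq_lineDeriv_div hp.integrable (α ^ 2)).fun_add
    (hconv hu.integrable_lineDeriv hp.integrable_lineDeriv (2 * α * β))
  have h₃ := hconv hu.integrable hp.integrable_sq_lineDeriv_div (β ^ 2)
  have hpos := (hp.convolution (fun x => (hu.pos x).le) hu.integral_eq_one).pos
  refine (integral_mono_of_nonneg (ae_of_all _ fun x => div_nonneg (sq_nonneg _) (hpos x).le)
    (h₁₂.fun_add h₃) (hu.sq_lineDeriv_convolution_div_ae_le hp hαβ)).trans_eq ?_
  rw [integral_add h₁₂ h₃, integral_add (hconv hu.integrable_sq_lineDeriv_div hp.integrable _)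
    (hconv hu.integrable_lineDeriv hp.integrable_lineDeriv _), integral_const_mul,
    integral_const_mul, integral_const_mul,
    integral_convolution _ hu.integrable_sq_lineDeriv_div hp.integrable,
    integral_convolution _ hu.integrable_lineDeriv hp.integrable_lineDeriv,
    integral_convolution _ hu.integrable hp.integrable_sq_lineDeriv_div]
  simp [hu.integral_eq_one, hp.integral_eq_one, hu.integral_lineDeriv, fisherInfo]

end FisherInformation

/-- The heat kernel (the fundamental solution of `∂ₜ u = Δ u`) on a Euclidean space, for `t > 0`. -/
noncomputable def heatKernel (t : ℝ) (z : E) : ℝ :=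
  (4 * π * t) ^ (-(finrank ℝ E : ℝ) / 2) * exp (-‖z‖ ^ 2 / (4 * t))

/-- The derivative of `heatKernel t` in the direction `e`. -/
noncomputable def heatKernelDeriv (e : E) (t : ℝ) (z : E) : ℝ :=
  -⟪z, e⟫_ℝ / (2 * t) * heatKernel t z

/-- The second derivative of `heatKernel t` in the direction `e`. -/
noncomputable def heatKernelDeriv₂ (e : E) (t : ℝ) (z : E) : ℝ :=
  (⟪z, e⟫_ℝ ^ 2 / (4 * t ^ 2) - ‖e‖ ^ 2 / (2 * t)) * heatKernel t z

section HeatKernel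

variable {a b s t : ℝ}

theorem heatKernel_pos (ht : 0 < t) (z : E) : 0 < heatKernel t z := by
  unfold heatKernel
  positivity

theorem continuous_heatKernel : Continuous (heatKernel t : E → ℝ) := by
  unfold heatKernel
  fun_prop

theorem continuous_heatKernelDeriv : Continuous (heatKernelDeriv e t) := by
  have := continuous_heatKernel (E := E) (t := t)
  unfold heatKernelDeriv
  fun_prop

theorem continuous_heatKernelDeriv₂ : Continuous (heatKernelDeriv₂ e t) := by
  have := continuous_heatKernel (E := E) (t := t)
  unfold heatKernelDeriv₂
  fun_prop

theorem heatKernel_le (ha : 0 < a) (hat : a ≤ t) (z : E) :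
    heatKernel t z ≤ (4 * π * a) ^ (-(finrank ℝ E : ℝ) / 2) := by
  have ht : 0 < t := ha.trans_le hat
  refine (mul_le_of_le_one_right (by positivity) (exp_le_one_iff.2 ?_)).trans
    (rpow_le_rpow_of_nonpos (by positivity) (by gcongr) ?_)
  · exact div_nonpos_of_nonpos_of_nonneg (by simp) (by positivity)
  · exact div_nonpos_of_nonpos_of_nonneg (by simp) zero_le_two

theorem abs_heatKernel_le (ha : 0 < a) (hat : a ≤ t) (z : E) :
    |heatKernel t z| ≤ (4 * π * a) ^ (-(finrank ℝ E : ℝ) / 2) :=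
  (abs_of_pos (heatKernel_pos (ha.trans_le hat) z)).trans_le (heatKernel_le ha hat z)

theorem mul_heatKernel_le (ht : 0 < t) (C : ℝ) (z : E) :
    C * heatKernel t z ≤ |C| * (4 * π * t) ^ (-(finrank ℝ E : ℝ) / 2) :=
  (le_abs_self _).trans <| (abs_mul _ _).trans_le <|
    mul_le_mul_of_nonneg_left (abs_heatKernel_le ht le_rfl z) (abs_nonneg _)

theorem heatKernel_mul_heatKernel_sub (ht : 0 < t) (hs : 0 < s) (x y : E) :
    heatKernel t y * heatKernel s (x - y) =
      heatKernel (t + s) x * heatKernel (t * s / (t + s)) (y - (t / (t + s)) • x) := by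
  have hsq : -‖y‖ ^ 2 / (4 * t) + -‖x - y‖ ^ 2 / (4 * s) = -‖x‖ ^ 2 / (4 * (t + s)) +
      -‖y - (t / (t + s)) • x‖ ^ 2 / (4 * (t * s / (t + s))) := by
    rw [norm_sub_sq_real, norm_sub_sq_real, norm_smul, inner_smul_right, real_inner_comm, mul_pow,
      norm_eq_abs, sq_abs]
    field_simp
    ring
  have hmul : 4 * π * t * (4 * π * s) = 4 * π * (t + s) * (4 * π * (t * s / (t + s))) := by
    field_simp
  unfold heatKernel
  rw [mul_mul_mul_comm, ← exp_add, hsq, mul_mul_mul_comm ((4 * π * (t + s)) ^ _), ← exp_add,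
    ← mul_rpow (by positivity) (by positivity), ← mul_rpow (by positivity) (by positivity), hmul]

theorem hasLineDerivAt_heatKernel (ht : t ≠ 0) (z : E) :
    HasLineDerivAt ℝ (heatKernel t) (heatKernelDeriv e t z) z e := by
  have hsq : HasLineDerivAt ℝ (fun z : E => ‖z‖ ^ 2) (2 * ⟪z, e⟫_ℝ) z e := by
    simpa using (hasStrictFDerivAt_norm_sq z).hasFDerivAt.hasLineDerivAt e
  unfold HasLineDerivAt at hsq ⊢
  convert! ((hsq.neg.div_const (4 * t)).exp.const_mul
    ((4 * π * t) ^ (-(finrank ℝ E : ℝ) / 2))) using 1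
  simp only [Pi.neg_apply, zero_smul, add_zero, heatKernelDeriv, heatKernel]
  field_simp
  ring

theorem lineDeriv_heatKernel (ht : t ≠ 0) (z : E) :
    lineDeriv ℝ (heatKernel t) z e = heatKernelDeriv e t z :=
  (hasLineDerivAt_heatKernel ht z).lineDeriv

theorem hasLineDerivAt_heatKernelDeriv (ht : t ≠ 0) (z : E) :
    HasLineDerivAt ℝ (heatKernelDeriv e t) (heatKernelDeriv₂ e t z) z e := by
  have hinner : HasLineDerivAt ℝ (fun z : E => ⟪z, e⟫_ℝ) (‖e‖ ^ 2) z e := by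
    simpa [real_inner_self_eq_norm_sq] using
      ((hasFDerivAt_id z).inner ℝ (hasFDerivAt_const e z)).hasLineDerivAt e
  unfold HasLineDerivAt at hinner ⊢
  convert! (hinner.neg.div_const (2 * t)).mul (hasLineDerivAt_heatKernel (e := e) ht z) using 1
  simp only [Pi.neg_apply, zero_smul, add_zero, heatKernelDeriv, heatKernelDeriv₂]
  field_simp
  ring

theorem sq_heatKernelDeriv_div_heatKernel (ht : 0 < t) (z : E) :
    heatKernelDeriv e t z ^ 2 / heatKernel t z =
      heatKernelDeriv₂ e t z + ‖e‖ ^ 2 / (2 * t) * heatKernel t z := by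
  have := heatKernel_pos ht z
  unfold heatKernelDeriv heatKernelDeriv₂
  field_simp
  ring

theorem sum_heatKernelDeriv₂ {ι : Type*} [Fintype ι] (B : OrthonormalBasis ι ℝ E) (t : ℝ) (z : E) :
    ∑ i, heatKernelDeriv₂ (B i) t z =
      (‖z‖ ^ 2 / (4 * t ^ 2) - finrank ℝ E / (2 * t)) * heatKernel t z := by
  simp only [heatKernelDeriv₂, ← Finset.sum_mul, Finset.sum_sub_distrib, ← Finset.sum_div,
    B.norm_eq_one, one_pow, OrthonormalBasis.sum_sq_inner_left, finrank_eq_card_basis B.toBasis]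
  simp

theorem hasDerivAt_heatKernel {ι : Type*} [Fintype ι] (B : OrthonormalBasis ι ℝ E) (ht : 0 < t)
    (z : E) :
    HasDerivAt (fun t => heatKernel t z) (∑ i, heatKernelDeriv₂ (B i) t z) t := by
  have hlin : HasDerivAt (fun t => 4 * π * t) (4 * π) t := by
    simpa using (hasDerivAt_id t).const_mul (4 * π)
  have hexp : HasDerivAt (fun t => -‖z‖ ^ 2 / (4 * t)) (‖z‖ ^ 2 / (4 * t ^ 2)) t := by
    convert! (hasDerivAt_const t (-‖z‖ ^ 2)).div ((hasDerivAt_id t).const_mul 4) (by positivity)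
      using 1
    simp only [zero_mul, mul_one, zero_sub, id_eq]
    field_simp
  rw [sum_heatKernelDeriv₂]
  convert! (hlin.rpow_const (p := -(finrank ℝ E : ℝ) / 2) (.inl (by positivity))).mul hexp.exp
    using 1
  rw [rpow_sub_one (by positivity), heatKernel]
  field_simp
  ring

theorem exists_one_add_norm_sq_mul_heatKernel_le (ha : 0 < a) (b : ℝ) : ∃ C, ∀ t ∈ Icc a b,
    ∀ z : E, (1 + ‖z‖ ^ 2) * heatKernel t z ≤ C * heatKernel (2 * b) z := by
  let k := (4 * π * a) ^ (-(finrank ℝ E : ℝ) / 2)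
  let k' := (4 * π * (2 * b)) ^ (-(finrank ℝ E : ℝ) / 2)
  refine ⟨(1 + 8 * b) * k / k', fun t ⟨hat, htb⟩ z => ?_⟩
  have ht : 0 < t := ha.trans_le hat
  have hb : 0 < b := ht.trans_le htb
  have hlin : 1 + ‖z‖ ^ 2 ≤ (1 + 8 * b) * exp (‖z‖ ^ 2 / (8 * b)) := by
    have h := add_one_le_exp (‖z‖ ^ 2 / (8 * b))
    have h' : ‖z‖ ^ 2 = 8 * b * (‖z‖ ^ 2 / (8 * b)) := by field_simp
    nlinarith [exp_pos (‖z‖ ^ 2 / (8 * b)), one_le_exp (x := ‖z‖ ^ 2 / (8 * b)) (by positivity)]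
  have hker : heatKernel t z ≤ k * exp (-‖z‖ ^ 2 / (4 * b)) := by
    refine mul_le_mul (rpow_le_rpow_of_nonpos (by positivity) (by gcongr) ?_)
      (exp_le_exp.2 ?_) (exp_pos _).le (by positivity)
    · exact div_nonpos_of_nonpos_of_nonneg (by simp) zero_le_two
    · rw [neg_div, neg_div]
      gcongr
  calc (1 + ‖z‖ ^ 2) * heatKernel t z
      ≤ (1 + 8 * b) * exp (‖z‖ ^ 2 / (8 * b)) * (k * exp (-‖z‖ ^ 2 / (4 * b))) :=
        mul_le_mul hlin hker (heatKernel_pos ht z).le (by positivity)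
    _ = (1 + 8 * b) * k * (exp (‖z‖ ^ 2 / (8 * b)) * exp (-‖z‖ ^ 2 / (4 * b))) := by ring
    _ = (1 + 8 * b) * k * exp (-‖z‖ ^ 2 / (4 * (2 * b))) := by
        rw [← exp_add]
        congr 2
        field_simp
        ring
    _ = (1 + 8 * b) * k / k' * heatKernel (2 * b) z := by
        have : k' ≠ 0 := by positivity
        change _ = (1 + 8 * b) * k / k' * (k' * exp _)
        field_simp

theorem inner_sq_le_norm_sq_mul_one_add_norm_sq (z e : E) :
    ⟪z, e⟫_ℝ ^ 2 ≤ ‖e‖ ^ 2 * (1 + ‖z‖ ^ 2) := by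
  have h := abs_real_inner_le_norm z e
  rw [← sq_abs]
  nlinarith [sq_nonneg ‖e‖, pow_le_pow_left₀ (abs_nonneg _) h 2]

theorem exists_abs_heatKernelDeriv_le (ht : 0 < t) (e : E) :
    ∃ C, ∀ z, |heatKernelDeriv e t z| ≤ C * heatKernel (2 * t) z := by
  obtain ⟨C, hC⟩ := exists_one_add_norm_sq_mul_heatKernel_le (E := E) ht t
  refine ⟨‖e‖ / (2 * t) * C, fun z => ?_⟩
  have hz : |⟪z, e⟫_ℝ| ≤ ‖e‖ * (1 + ‖z‖ ^ 2) := by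
    nlinarith [abs_real_inner_le_norm z e, norm_nonneg e, sq_nonneg (‖z‖ - 1)]
  calc |heatKernelDeriv e t z| = |⟪z, e⟫_ℝ| / (2 * t) * heatKernel t z := by
        rw [heatKernelDeriv, abs_mul, abs_div, abs_neg, abs_of_pos (heatKernel_pos ht z),
          abs_of_pos (show 0 < 2 * t by positivity)]
    _ ≤ ‖e‖ * (1 + ‖z‖ ^ 2) / (2 * t) * heatKernel t z := by
        have := heatKernel_pos ht z
        gcongr
    _ = ‖e‖ / (2 * t) * ((1 + ‖z‖ ^ 2) * heatKernel t z) := by ring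
    _ ≤ ‖e‖ / (2 * t) * (C * heatKernel (2 * t) z) := by
        have := hC t ⟨le_rfl, le_rfl⟩ z
        gcongr
    _ = _ := by ring

theorem exists_abs_heatKernelDeriv₂_le (ha : 0 < a) (b : ℝ) (e : E) :
    ∃ C, ∀ t ∈ Icc a b, ∀ z, |heatKernelDeriv₂ e t z| ≤ C * heatKernel (2 * b) z := by
  obtain ⟨C, hC⟩ := exists_one_add_norm_sq_mul_heatKernel_le (E := E) ha b
  refine ⟨(‖e‖ ^ 2 / (4 * a ^ 2) + ‖e‖ ^ 2 / (2 * a)) * C, fun t ht z => ?_⟩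
  have ht0 : 0 < t := ha.trans_le ht.1
  have hcoef : |⟪z, e⟫_ℝ ^ 2 / (4 * t ^ 2) - ‖e‖ ^ 2 / (2 * t)| ≤
      (‖e‖ ^ 2 / (4 * a ^ 2) + ‖e‖ ^ 2 / (2 * a)) * (1 + ‖z‖ ^ 2) := by
    have h₁ : ⟪z, e⟫_ℝ ^ 2 / (4 * t ^ 2) ≤ ‖e‖ ^ 2 * (1 + ‖z‖ ^ 2) / (4 * a ^ 2) := by
      gcongr
      exacts [inner_sq_le_norm_sq_mul_one_add_norm_sq z e, ht.1]
    have h₂ : ‖e‖ ^ 2 / (2 * t) ≤ ‖e‖ ^ 2 * (1 + ‖z‖ ^ 2) / (2 * a) := by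
      gcongr
      exacts [le_mul_of_one_le_right (sq_nonneg _) (by linarith [sq_nonneg ‖z‖]), ht.1]
    refine (abs_sub _ _).trans ?_
    rw [abs_of_nonneg (by positivity), abs_of_nonneg (by positivity)]
    exact (add_le_add h₁ h₂).trans_eq (by ring)
  calc |heatKernelDeriv₂ e t z|
      ≤ (‖e‖ ^ 2 / (4 * a ^ 2) + ‖e‖ ^ 2 / (2 * a)) * (1 + ‖z‖ ^ 2) * heatKernel t z := by
        rw [heatKernelDeriv₂, abs_mul, abs_of_pos (heatKernel_pos ht0 z)]
        exact mul_le_mul_of_nonneg_right hcoef (heatKernel_pos ht0 z).le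
    _ ≤ (‖e‖ ^ 2 / (4 * a ^ 2) + ‖e‖ ^ 2 / (2 * a)) * C * heatKernel (2 * b) z := by
        rw [mul_assoc, mul_assoc]
        exact mul_le_mul_of_nonneg_left (hC t ht z) (by positivity)

theorem exists_abs_log_heatKernel_le (ha : 0 < a) (b : ℝ) :
    ∃ C, 0 ≤ C ∧ ∀ t ∈ Icc a b, ∀ z : E, |log (heatKernel t z)| ≤ C * (1 + ‖z‖ ^ 2) := by
  let n : ℝ := finrank ℝ E
  let L := |log (4 * π * a)| + |log (4 * π * b)|
  refine ⟨n / 2 * L + 1 / (4 * a), by positivity, fun t ⟨hat, htb⟩ z => ?_⟩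
  have ht : 0 < t := ha.trans_le hat
  have hL : |log (4 * π * t)| ≤ L :=
    (abs_le_max_abs_abs (log_le_log (by positivity) (by gcongr))
      (log_le_log (by positivity) (by gcongr))).trans
      (max_le_add_of_nonneg (abs_nonneg _) (abs_nonneg _))
  calc |log (heatKernel t z)| = |n / 2 * log (4 * π * t) + 1 / (4 * t) * ‖z‖ ^ 2| := by
        rw [heatKernel, log_mul (by positivity) (exp_pos _).ne', log_rpow (by positivity), log_exp,
          ← abs_neg]
        congr 1
        ring
    _ ≤ n / 2 * |log (4 * π * t)| + 1 / (4 * t) * ‖z‖ ^ 2 := by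
        refine (abs_add_le _ _).trans_eq ?_
        rw [abs_mul, abs_of_nonneg (by positivity : 0 ≤ n / 2),
          abs_of_nonneg (by positivity : 0 ≤ 1 / (4 * t) * ‖z‖ ^ 2)]
    _ ≤ n / 2 * L + 1 / (4 * a) * ‖z‖ ^ 2 := by gcongr
    _ ≤ (n / 2 * L + 1 / (4 * a)) * (1 + ‖z‖ ^ 2) := by
        have h₁ : 0 ≤ n / 2 * L * ‖z‖ ^ 2 := by positivity
        have h₂ : 0 ≤ 1 / (4 * a) := by positivity
        linarith

variable [FiniteDimensional ℝ E] [MeasurableSpace E] [BorelSpace E]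

theorem integral_heatKernel (ht : 0 < t) : ∫ z : E, heatKernel t z = 1 := by
  have hexp : ∀ z : E, -‖z‖ ^ 2 / (4 * t) = -(1 / (4 * t)) * ‖z‖ ^ 2 := fun z => by ring
  simp only [heatKernel, hexp]
  rw [integral_const_mul, GaussianFourier.integral_rexp_neg_mul_sq_norm (by positivity),
    div_div_eq_mul_div, div_one, neg_div, rpow_neg (by positivity),
    show π * (4 * t) = 4 * π * t by ring]
  exact inv_mul_cancel₀ (by positivity)

theorem integrable_heatKernel (ht : 0 < t) : Integrable (heatKernel t : E → ℝ) :=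
  integrable_of_integral_eq_one (integral_heatKernel ht)

theorem heatKernel_convolution_heatKernel (ht : 0 < t) (hs : 0 < s) :
    (heatKernel t ⋆ heatKernel s : E → ℝ) = heatKernel (t + s) := by
  ext x
  simp only [convolution_apply, heatKernel_mul_heatKernel_sub ht hs]
  rw [integral_const_mul, integral_sub_right_eq_self (heatKernel (t * s / (t + s))),
    integral_heatKernel (by positivity), mul_one]

theorem integrable_heatKernelDeriv (ht : 0 < t) : Integrable (heatKernelDeriv e t) :=
  let ⟨C, hC⟩ := exists_abs_heatKernelDeriv_le ht e
  ((integrable_heatKernel (by positivity)).const_mul C).mono'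
    continuous_heatKernelDeriv.aestronglyMeasurable (ae_of_all _ hC)

theorem integrable_heatKernelDeriv₂ (ht : 0 < t) : Integrable (heatKernelDeriv₂ e t) :=
  let ⟨C, hC⟩ := exists_abs_heatKernelDeriv₂_le ht t e
  ((integrable_heatKernel (by positivity)).const_mul C).mono'
    continuous_heatKernelDeriv₂.aestronglyMeasurable (ae_of_all _ (hC t ⟨le_rfl, le_rfl⟩))

theorem integrable_one_add_norm_sq_mul_heatKernel (ht : 0 < t) :
    Integrable fun z : E => (1 + ‖z‖ ^ 2) * heatKernel t z := by
  obtain ⟨C, hC⟩ := exists_one_add_norm_sq_mul_heatKernel_le (E := E) ht t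
  refine ((integrable_heatKernel (t := 2 * t) (by positivity)).const_mul C).mono'
    (.mul (by fun_prop) continuous_heatKernel.aestronglyMeasurable) (ae_of_all _ fun z => ?_)
  rw [norm_of_nonneg (mul_nonneg (by positivity) (heatKernel_pos ht z).le)]
  exact hC t ⟨le_rfl, le_rfl⟩ z

theorem integral_heatKernelDeriv₂ (ht : 0 < t) (e : E) : ∫ z, heatKernelDeriv₂ e t z = 0 :=
  integral_lineDeriv_eq_zero (hasLineDerivAt_heatKernelDeriv ht.ne')
    (integrable_heatKernelDeriv ht) (integrable_heatKernelDeriv₂ ht)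

theorem fisherInfo_heatKernel (ht : 0 < t) (e : E) :
    fisherInfo e (heatKernel t) = ‖e‖ ^ 2 / (2 * t) := by
  simp only [fisherInfo, lineDeriv_heatKernel ht.ne', sq_heatKernelDeriv_div_heatKernel ht]
  rw [integral_add (integrable_heatKernelDeriv₂ ht) ((integrable_heatKernel ht).const_mul _),
    integral_heatKernelDeriv₂ ht, integral_const_mul, integral_heatKernel ht, mul_one, zero_add]

theorem isRegularDensity_heatKernel (ht : 0 < t) (e : E) : IsRegularDensity e (heatKernel t) := by
  have hderiv : (fun z => lineDeriv ℝ (heatKernel t) z e) = heatKernelDeriv e t :=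
    funext (lineDeriv_heatKernel ht.ne')
  obtain ⟨C, hC⟩ := exists_abs_heatKernelDeriv_le ht e
  have hbdd := fun z => (hC z).trans (mul_heatKernel_le (by positivity) C z)
  refine ⟨heatKernel_pos ht, integral_heatKernel ht, continuous_heatKernel,
    ⟨_, abs_heatKernel_le ht le_rfl⟩,
    fun z => (hasLineDerivAt_heatKernel ht.ne' z).lineDifferentiableAt,
    hderiv ▸ continuous_heatKernelDeriv,
    ⟨_, fun z => (congrArg abs (lineDeriv_heatKernel ht.ne' z)).trans_le (hbdd z)⟩,
    hderiv ▸ integrable_heatKernelDeriv ht, ?_⟩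
  simp only [lineDeriv_heatKernel ht.ne', sq_heatKernelDeriv_div_heatKernel ht]
  exact (integrable_heatKernelDeriv₂ ht).add ((integrable_heatKernel ht).const_mul _)

end HeatKernel

section HeatFlow

variable [FiniteDimensional ℝ E] [MeasurableSpace E] [BorelSpace E]

variable {a b s t : ℝ}

theorem continuous_convolution_heatKernel (hfi : Integrable f) (ht : 0 < t) :
    Continuous (f ⋆ heatKernel t) :=
  continuous_convolution hfi continuous_heatKernel (abs_heatKernel_le ht le_rfl)

theorem isRegularDensity_convolution_heatKernel (hf : ∀ x, 0 ≤ f x) (hf1 : ∫ x, f x = 1)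
    (ht : 0 < t) (e : E) : IsRegularDensity e (f ⋆ heatKernel t) :=
  (isRegularDensity_heatKernel ht e).convolution hf hf1

theorem convolution_heatKernel_pos (hf : ∀ x, 0 ≤ f x) (hf1 : ∫ x, f x = 1) (ht : 0 < t) (x : E) :
    0 < (f ⋆ heatKernel t) x :=
  (isRegularDensity_convolution_heatKernel hf hf1 ht 0).pos x

theorem convolution_heatKernel_add (hf : Integrable f) (ht : 0 < t) (hs : 0 < s) :
    (f ⋆ heatKernel t) ⋆ heatKernel s = f ⋆ heatKernel (t + s) := by
  have hnorm : ∀ {r : ℝ}, 0 < r → (fun z : E => ‖heatKernel r z‖) = heatKernel r :=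
    fun hr => funext fun z => norm_of_nonneg (heatKernel_pos hr z).le
  have hbdd := abs_heatKernel_le (E := E) hs le_rfl
  ext x
  rw [← heatKernel_convolution_heatKernel ht hs]
  refine convolution_assoc _ _ _ _ (fun a b c => by simp [mul_assoc]) hf.aestronglyMeasurable
    continuous_heatKernel.aestronglyMeasurable continuous_heatKernel.aestronglyMeasurable
    (hf.ae_convolution_exists _ (integrable_heatKernel ht)) (ae_of_all _ fun y => ?_) ?_
  · rw [hnorm ht, hnorm hs]
    exact integrable_mul_comp_sub_left (integrable_heatKernel ht) continuous_heatKernel hbdd y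
  · rw [hnorm ht, hnorm hs]
    change ConvolutionExistsAt _ (heatKernel t ⋆ heatKernel s) _ _ _
    rw [heatKernel_convolution_heatKernel ht hs]
    exact integrable_mul_comp_sub_left hf.norm continuous_heatKernel
      (abs_heatKernel_le (by positivity) le_rfl) x

theorem exists_abs_log_convolution_heatKernel_le (hf : ∀ x, 0 ≤ f x) (hf1 : ∫ x, f x = 1)
    (hf2 : Integrable fun x => (1 + ‖x‖ ^ 2) * f x) (ha : 0 < a) (b : ℝ) :
    ∃ C, 0 ≤ C ∧ ∀ t ∈ Icc a b, ∀ x, |log ((f ⋆ heatKernel t) x)| ≤ C * (1 + ‖x‖ ^ 2) := by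
  let M := ∫ y, (1 + ‖y‖ ^ 2) * f y
  have hM : 0 ≤ M := integral_nonneg fun y => mul_nonneg (by positivity) (hf y)
  let k := (4 * π * a) ^ (-(finrank ℝ E : ℝ) / 2)
  obtain ⟨C, hC0, hC⟩ := exists_abs_log_heatKernel_le (E := E) ha b
  refine ⟨2 * C * M + |log k|, by positivity, fun t ht x => ?_⟩
  have ht0 : 0 < t := ha.trans_le ht.1
  have hx : 1 ≤ 1 + ‖x‖ ^ 2 := le_add_of_nonneg_right (sq_nonneg _)
  have hlower : -log ((f ⋆ heatKernel t) x) ≤ 2 * C * M * (1 + ‖x‖ ^ 2) :=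
    neg_log_convolution_le hf hf1 hf2 (heatKernel_pos ht0) continuous_heatKernel
      (abs_heatKernel_le ht0 le_rfl) (hC t ht) x
  have hupper : log ((f ⋆ heatKernel t) x) ≤ |log k| :=
    (log_le_log (convolution_heatKernel_pos hf hf1 ht0 x) <| (le_abs_self _).trans <|
      abs_convolution_le hf hf1 (abs_heatKernel_le ha ht.1) x).trans (le_abs_self _)
  have hk := le_mul_of_one_le_right (abs_nonneg (log k)) hx
  have hCM : 0 ≤ 2 * C * M * (1 + ‖x‖ ^ 2) := by positivity
  rw [add_mul]
  exact abs_le'.2 ⟨by linarith, by linarith [abs_nonneg (log k)]⟩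

theorem hasLineDerivAt_convolution_heatKernel (hf : Integrable f) (ht : 0 < t) (x : E) :
    HasLineDerivAt ℝ (f ⋆ heatKernel t) ((f ⋆ heatKernelDeriv e t) x) x e := by
  simpa only [lineDeriv_heatKernel ht.ne'] using
    (isRegularDensity_heatKernel ht e).hasLineDerivAt_convolution hf x

theorem hasLineDerivAt_convolution_heatKernelDeriv (hf : Integrable f) (ht : 0 < t) (x : E) :
    HasLineDerivAt ℝ (f ⋆ heatKernelDeriv e t) ((f ⋆ heatKernelDeriv₂ e t) x) x e :=
  let ⟨C, hC⟩ := exists_abs_heatKernelDeriv_le ht e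
  let ⟨C₂, hC₂⟩ := exists_abs_heatKernelDeriv₂_le ht t e
  hasLineDerivAt_convolution hf continuous_heatKernelDeriv
    (fun z => (hC z).trans (mul_heatKernel_le (by positivity) C z)) continuous_heatKernelDeriv₂
    (fun z => (hC₂ t ⟨le_rfl, le_rfl⟩ z).trans (mul_heatKernel_le (by positivity) C₂ z))
    (hasLineDerivAt_heatKernelDeriv ht.ne') x

theorem hasDerivAt_convolution_heatKernel {ι : Type*} [Fintype ι] (B : OrthonormalBasis ι ℝ E)
    (hf : Integrable f) (ht : 0 < t) (x : E) :
    HasDerivAt (fun t => (f ⋆ heatKernel t) x) (∑ i, (f ⋆ heatKernelDeriv₂ (B i) t) x) t := by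
  have hS : Icc (t / 2) (2 * t) ∈ 𝓝 t := Icc_mem_nhds (by linarith) (by linarith)
  choose C hC using fun i => exists_abs_heatKernelDeriv₂_le (half_pos ht) (2 * t) (B i)
  have hbdd := fun i s hs z =>
    (hC i s hs z).trans (mul_heatKernel_le (by positivity : 0 < 2 * (2 * t)) (C i) z)
  have hcont : Continuous fun z => ∑ i, heatKernelDeriv₂ (B i) t z :=
    continuous_finsetSum _ fun i _ => continuous_heatKernelDeriv₂
  convert! hasDerivAt_integral_mul_comp_sub (K := heatKernel)
    (K' := fun s z => ∑ i, heatKernelDeriv₂ (B i) s z) hf hS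
    (fun _ _ => continuous_heatKernel) (abs_heatKernel_le ht le_rfl) hcont
    (fun s hs z => (Finset.abs_sum_le_sum_abs _ _).trans
      (Finset.sum_le_sum fun i _ => hbdd i s hs z))
    (fun s hs z => hasDerivAt_heatKernel B ((half_pos ht).trans_le hs.1) z) x using 1
  simp only [convolution_apply, Finset.mul_sum]
  exact (integral_finsetSum _ fun i _ => integrable_mul_comp_sub_left hf
    continuous_heatKernelDeriv₂ (hbdd i t (mem_of_mem_nhds hS)) x).symm

theorem integrable_one_add_norm_sq_mul_convolution_heatKernel (hf : ∀ x, 0 ≤ f x)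
    (hfi : Integrable f) (hf2 : Integrable fun x => (1 + ‖x‖ ^ 2) * f x) (ht : 0 < t) :
    Integrable fun x => (1 + ‖x‖ ^ 2) * (f ⋆ heatKernel t) x :=
  integrable_one_add_norm_sq_mul_convolution hf (fun z => (heatKernel_pos ht z).le) hfi
    (integrable_heatKernel ht) hf2 (integrable_one_add_norm_sq_mul_heatKernel ht)

theorem abs_convolution_le_mul_convolution_heatKernel {K : E → ℝ} {C : ℝ} (hf : ∀ x, 0 ≤ f x)
    (hfi : Integrable f) (hs : 0 < s) (hC : ∀ z, |K z| ≤ C * heatKernel s z) (x : E) :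
    |(f ⋆ K) x| ≤ C * (f ⋆ heatKernel s) x :=
  abs_convolution_le_mul_convolution hfi hf continuous_heatKernel (abs_heatKernel_le hs le_rfl) hC x

theorem integrable_log_mul_convolution {K : E → ℝ} {C : ℝ} (hf : ∀ x, 0 ≤ f x)
    (hf1 : ∫ x, f x = 1) (hf2 : Integrable fun x => (1 + ‖x‖ ^ 2) * f x) (ht : 0 < t) (hs : 0 < s)
    (hK : Continuous K) (hC : ∀ z, |K z| ≤ C * heatKernel s z) :
    Integrable fun x => log ((f ⋆ heatKernel t) x) * (f ⋆ K) x := by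
  have hfi : Integrable f := integrable_of_integral_eq_one hf1
  have hlog : Continuous fun x => log ((f ⋆ heatKernel t) x) :=
    (continuous_convolution_heatKernel hfi ht).log
      fun x => (convolution_heatKernel_pos hf hf1 ht x).ne'
  have hcont : Continuous (f ⋆ K) :=
    continuous_convolution hfi hK fun z => (hC z).trans (mul_heatKernel_le hs C z)
  obtain ⟨L, hL0, hL⟩ := exists_abs_log_convolution_heatKernel_le hf hf1 hf2 ht t
  refine ((integrable_one_add_norm_sq_mul_convolution_heatKernel hf hfi hf2 hs).const_mul
    (L * C)).mono' (hlog.mul hcont).aestronglyMeasurable (ae_of_all _ fun x => ?_)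
  calc ‖log ((f ⋆ heatKernel t) x) * (f ⋆ K) x‖
      ≤ L * (1 + ‖x‖ ^ 2) * (C * (f ⋆ heatKernel s) x) := by
        rw [norm_mul]
        exact mul_le_mul (hL t ⟨le_rfl, le_rfl⟩ x)
          (abs_convolution_le_mul_convolution_heatKernel hf hfi hs hC x) (norm_nonneg _)
          (by positivity)
    _ = _ := by ring

theorem integrable_log_mul_convolution_heatKernelDeriv₂ (hf : ∀ x, 0 ≤ f x)
    (hf1 : ∫ x, f x = 1) (hf2 : Integrable fun x => (1 + ‖x‖ ^ 2) * f x) (ht : 0 < t) (e : E) :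
    Integrable fun x => log ((f ⋆ heatKernel t) x) * (f ⋆ heatKernelDeriv₂ e t) x :=
  let ⟨_, hC⟩ := exists_abs_heatKernelDeriv₂_le ht t e
  integrable_log_mul_convolution hf hf1 hf2 ht (by positivity) continuous_heatKernelDeriv₂
    (hC t ⟨le_rfl, le_rfl⟩)

theorem integral_log_mul_convolution_heatKernelDeriv₂ (hf : ∀ x, 0 ≤ f x) (hf1 : ∫ x, f x = 1)
    (hf2 : Integrable fun x => (1 + ‖x‖ ^ 2) * f x) (ht : 0 < t) (e : E) :
    ∫ x, log ((f ⋆ heatKernel t) x) * (f ⋆ heatKernelDeriv₂ e t) x =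
      -fisherInfo e (f ⋆ heatKernel t) := by
  have hfi : Integrable f := integrable_of_integral_eq_one hf1
  have hreg := isRegularDensity_convolution_heatKernel hf hf1 ht e
  have hderiv := hasLineDerivAt_convolution_heatKernel (e := e) hfi ht
  have hlog : ∀ x, HasLineDerivAt ℝ (fun x => log ((f ⋆ heatKernel t) x))
      ((f ⋆ heatKernelDeriv e t) x / (f ⋆ heatKernel t) x) x e := fun x => by
    have h := hderiv x
    unfold HasLineDerivAt at h ⊢
    simpa using h.log (by simpa using (hreg.pos x).ne')
  have hfisher : ∀ x, (f ⋆ heatKernelDeriv e t) x / (f ⋆ heatKernel t) x *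
      (f ⋆ heatKernelDeriv e t) x =
      lineDeriv ℝ (f ⋆ heatKernel t) x e ^ 2 / (f ⋆ heatKernel t) x := fun x => by
    rw [(hderiv x).lineDeriv]
    ring
  obtain ⟨C, hC⟩ := exists_abs_heatKernelDeriv_le ht e
  rw [integral_mul_lineDeriv_eq_neg hlog (hasLineDerivAt_convolution_heatKernelDeriv hfi ht)
    (integrable_log_mul_convolution hf hf1 hf2 ht (by positivity) continuous_heatKernelDeriv hC)
    (by simpa only [hfisher] using hreg.integrable_sq_lineDeriv_div)
    (integrable_log_mul_convolution_heatKernelDeriv₂ hf hf1 hf2 ht e)]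
  simp only [hfisher, fisherInfo]

theorem integrable_neg_log_sub_one_mul_convolution_heatKernelDeriv₂ (hf : ∀ x, 0 ≤ f x)
    (hf1 : ∫ x, f x = 1) (hf2 : Integrable fun x => (1 + ‖x‖ ^ 2) * f x) (ht : 0 < t) (e : E) :
    Integrable fun x => (-log ((f ⋆ heatKernel t) x) - 1) * (f ⋆ heatKernelDeriv₂ e t) x := by
  have hfi : Integrable f := integrable_of_integral_eq_one hf1
  simp only [sub_mul, neg_mul, one_mul]
  exact (integrable_log_mul_convolution_heatKernelDeriv₂ hf hf1 hf2 ht e).neg.sub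
    (hfi.integrable_convolution _ (integrable_heatKernelDeriv₂ ht))

theorem integral_neg_log_sub_one_mul_convolution_heatKernelDeriv₂ (hf : ∀ x, 0 ≤ f x)
    (hf1 : ∫ x, f x = 1) (hf2 : Integrable fun x => (1 + ‖x‖ ^ 2) * f x) (ht : 0 < t) (e : E) :
    ∫ x, (-log ((f ⋆ heatKernel t) x) - 1) * (f ⋆ heatKernelDeriv₂ e t) x =
      fisherInfo e (f ⋆ heatKernel t) := by
  have hfi : Integrable f := integrable_of_integral_eq_one hf1
  have hderiv₂ := integrable_heatKernelDeriv₂ (e := e) ht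
  simp only [sub_mul, neg_mul, one_mul]
  rw [integral_sub (integrable_log_mul_convolution_heatKernelDeriv₂ hf hf1 hf2 ht e).fun_neg
      (hfi.integrable_convolution _ hderiv₂), integral_neg,
    integral_log_mul_convolution_heatKernelDeriv₂ hf hf1 hf2 ht,
    integral_convolution _ hfi hderiv₂, integral_heatKernelDeriv₂ ht, map_zero, neg_neg, sub_zero]

/-- The differential entropy `-∫ u log u` of the density `u`. -/
noncomputable def diffEntropy (u : E → ℝ) : ℝ :=
  ∫ x, negMulLog (u x)

theorem integrable_negMulLog_convolution_heatKernel (hf : ∀ x, 0 ≤ f x) (hf1 : ∫ x, f x = 1)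
    (hf2 : Integrable fun x => (1 + ‖x‖ ^ 2) * f x) (ht : 0 < t) :
    Integrable fun x => negMulLog ((f ⋆ heatKernel t) x) := by
  have hker : ∀ z : E, |heatKernel t z| ≤ 1 * heatKernel t z := fun z =>
    (abs_of_pos (heatKernel_pos ht z)).trans_le (one_mul _).ge
  simpa only [negMulLog, neg_mul, mul_comm] using
    (integrable_log_mul_convolution hf hf1 hf2 ht ht continuous_heatKernel hker).fun_neg

theorem hasDerivAt_negMulLog_convolution_heatKernel {ι : Type*} [Fintype ι]
    (B : OrthonormalBasis ι ℝ E) (hf : ∀ x, 0 ≤ f x) (hf1 : ∫ x, f x = 1) (ht : 0 < t) (x : E) :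
    HasDerivAt (fun t => negMulLog ((f ⋆ heatKernel t) x))
      ((-log ((f ⋆ heatKernel t) x) - 1) * ∑ i, (f ⋆ heatKernelDeriv₂ (B i) t) x) t :=
  HasDerivAt.comp t (h := fun t => (f ⋆ heatKernel t) x)
    (hasDerivAt_negMulLog (convolution_heatKernel_pos hf hf1 ht x).ne')
    (hasDerivAt_convolution_heatKernel B (integrable_of_integral_eq_one hf1) ht x)

theorem exists_abs_neg_log_sub_one_mul_sum_le {ι : Type*} [Fintype ι] (B : ι → E)
    (hf : ∀ x, 0 ≤ f x) (hf1 : ∫ x, f x = 1) (hf2 : Integrable fun x => (1 + ‖x‖ ^ 2) * f x)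
    (ha : 0 < a) (hb : 0 < b) :
    ∃ C, ∀ t ∈ Icc a b, ∀ x,
      |(-log ((f ⋆ heatKernel t) x) - 1) * ∑ i, (f ⋆ heatKernelDeriv₂ (B i) t) x| ≤
        C * ((1 + ‖x‖ ^ 2) * (f ⋆ heatKernel (2 * b)) x) := by
  have hfi : Integrable f := integrable_of_integral_eq_one hf1
  obtain ⟨L, hL0, hL⟩ := exists_abs_log_convolution_heatKernel_le hf hf1 hf2 ha b
  choose C hC using fun i => exists_abs_heatKernelDeriv₂_le ha b (B i)
  refine ⟨(L + 1) * ∑ i, C i, fun t ht x => ?_⟩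
  have hlog : |-log ((f ⋆ heatKernel t) x) - 1| ≤ (L + 1) * (1 + ‖x‖ ^ 2) := by
    have h := abs_sub (-log ((f ⋆ heatKernel t) x)) 1
    rw [abs_neg, abs_one] at h
    linarith [hL t ht x, sq_nonneg ‖x‖]
  have hsum : |∑ i, (f ⋆ heatKernelDeriv₂ (B i) t) x| ≤
      (∑ i, C i) * (f ⋆ heatKernel (2 * b)) x := by
    rw [Finset.sum_mul]
    exact (Finset.abs_sum_le_sum_abs _ _).trans <| Finset.sum_le_sum fun i _ =>
      abs_convolution_le_mul_convolution_heatKernel hf hfi (by positivity) (hC i t ht) x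
  rw [abs_mul]
  exact (mul_le_mul hlog hsum (abs_nonneg _) (by positivity)).trans_eq (by ring)

theorem hasDerivAt_diffEntropy_convolution_heatKernel {ι : Type*} [Fintype ι]
    (B : OrthonormalBasis ι ℝ E) (hf : ∀ x, 0 ≤ f x) (hf1 : ∫ x, f x = 1)
    (hf2 : Integrable fun x => (1 + ‖x‖ ^ 2) * f x) (ht : 0 < t) :
    HasDerivAt (fun t => diffEntropy (f ⋆ heatKernel t))
      (∑ i, fisherInfo (B i) (f ⋆ heatKernel t)) t := by
  have hfi : Integrable f := integrable_of_integral_eq_one hf1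
  have hS : Icc (t / 2) (2 * t) ∈ 𝓝 t := Icc_mem_nhds (by linarith) (by linarith)
  have hpos : ∀ s ∈ Icc (t / 2) (2 * t), 0 < s := fun s hs => (half_pos ht).trans_le hs.1
  obtain ⟨C, hC⟩ := exists_abs_neg_log_sub_one_mul_sum_le B hf hf1 hf2 (half_pos ht)
    (by positivity : 0 < 2 * t)
  have hterm := fun i =>
    integrable_neg_log_sub_one_mul_convolution_heatKernelDeriv₂ hf hf1 hf2 ht (B i)
  have hsum := integrable_finsetSum Finset.univ fun i _ => hterm i
  have hfisher : ∫ x, (-log ((f ⋆ heatKernel t) x) - 1) *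
      ∑ i, (f ⋆ heatKernelDeriv₂ (B i) t) x = ∑ i, fisherInfo (B i) (f ⋆ heatKernel t) := by
    simp only [Finset.mul_sum, integral_finsetSum Finset.univ fun i _ => hterm i,
      integral_neg_log_sub_one_mul_convolution_heatKernelDeriv₂ hf hf1 hf2 ht]
  simp only [← Finset.mul_sum] at hsum
  rw [← hfisher]
  exact (hasDerivAt_integral_of_dominated_loc_of_deriv_le
    (F := fun s x => negMulLog ((f ⋆ heatKernel s) x)) hS
    (Filter.eventually_of_mem hS fun s hs => (continuous_negMulLog.comp
      (continuous_convolution_heatKernel hfi (hpos s hs))).aestronglyMeasurable)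
    (integrable_negMulLog_convolution_heatKernel hf hf1 hf2 ht) hsum.aestronglyMeasurable
    (ae_of_all _ fun x s hs => hC s hs x)
    ((integrable_one_add_norm_sq_mul_convolution_heatKernel hf hfi hf2 (by positivity)).const_mul C)
    (ae_of_all _ fun x s hs =>
      hasDerivAt_negMulLog_convolution_heatKernel B hf hf1 (hpos s hs) x)).2

theorem sum_fisherInfo_convolution_heatKernel_add_le {ι : Type*} [Fintype ι] [Nonempty ι]
    (B : OrthonormalBasis ι ℝ E) (hf : ∀ x, 0 ≤ f x) (hf1 : ∫ x, f x = 1) (ht : 0 < t)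
    (hs : 0 < s) :
    ∑ i, fisherInfo (B i) (f ⋆ heatKernel (t + s)) ≤
      (∑ i, fisherInfo (B i) (f ⋆ heatKernel t)) /
        (1 + 2 / Fintype.card ι * s * ∑ i, fisherInfo (B i) (f ⋆ heatKernel t)) := by
  have hreg := fun i => isRegularDensity_convolution_heatKernel hf hf1 ht (B i)
  set J := ∑ i, fisherInfo (B i) (f ⋆ heatKernel t) with hJ
  have hJ0 : 0 ≤ J := Finset.sum_nonneg fun i _ => fisherInfo_nonneg fun x => ((hreg i).pos x).le
  set n : ℝ := (Fintype.card ι : ℝ)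
  have hn : 0 < n := Nat.cast_pos.2 Fintype.card_pos
  -- `α = n / D` and `β = 2 s J / D` minimize `α² J + β² n / (2 s)` subject to `α + β = 1`.
  let D := n + 2 * s * J
  have hD : 0 < D := by positivity
  have hαβ : n / D + 2 * s * J / D = 1 := by rw [← add_div, div_self hD.ne']
  calc ∑ i, fisherInfo (B i) (f ⋆ heatKernel (t + s))
      ≤ ∑ i, ((n / D) ^ 2 * fisherInfo (B i) (f ⋆ heatKernel t) +
          (2 * s * J / D) ^ 2 * (1 / (2 * s))) := Finset.sum_le_sum fun i _ => by
        rw [← convolution_heatKernel_add (integrable_of_integral_eq_one hf1) ht hs]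
        refine (fisherInfo_convolution_le (hreg i) (isRegularDensity_heatKernel hs (B i))
          hαβ).trans_eq ?_
        rw [fisherInfo_heatKernel hs, B.norm_eq_one, one_pow]
    _ = (n / D) ^ 2 * J + n * ((2 * s * J / D) ^ 2 * (1 / (2 * s))) := by
        rw [Finset.sum_add_distrib, ← Finset.mul_sum, ← hJ, Finset.sum_const, Finset.card_univ,
          nsmul_eq_mul]
    _ = J / (1 + 2 / n * s * J) := by
        simp only [D] at hD ⊢
        field_simp

theorem entropyPower_concave_general [Nontrivial E] (hf : ∀ x, 0 ≤ f x) (hf1 : ∫ x, f x = 1)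
    (hf2 : Integrable fun x => ‖x‖ ^ 2 * f x) :
    ConcaveOn ℝ (Ioi 0) fun t => exp (2 / finrank ℝ E * diffEntropy (f ⋆ heatKernel t)) := by
  have hf2' : Integrable fun x => (1 + ‖x‖ ^ 2) * f x := by
    simpa only [add_mul, one_mul] using (integrable_of_integral_eq_one hf1).fun_add hf2
  have : Nonempty (Fin (finrank ℝ E)) := Fin.pos_iff_nonempty.1 finrank_pos
  let B := stdOrthonormalBasis ℝ E
  refine concaveOn_exp_mul_of_hasDerivAt (by positivity)
    (fun t ht => hasDerivAt_diffEntropy_convolution_heatKernel B hf hf1 hf2' ht)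
    (fun t ht => Finset.sum_nonneg fun i _ => fisherInfo_nonneg fun x =>
      (convolution_heatKernel_pos hf hf1 ht x).le) fun t s ht hs => ?_
  simpa using sum_fisherInfo_convolution_heatKernel_add_le B hf hf1 ht hs

end HeatFlow

theorem entropyPower_eq (n : ℕ) (f : EuclideanSpace ℝ (Fin n) → ℝ) (t : ℝ) :
    entropyPower n f t =
      exp (2 / finrank ℝ (EuclideanSpace ℝ (Fin n)) * diffEntropy (f ⋆ heatKernel t)) := by
  have hsol : ∀ x, heatSol n f t x = (f ⋆ heatKernel t) x := fun x => by
    simp only [heatSol, convolution_apply, heatKernel, finrank_euclideanSpace_fin, mul_comm (f _)]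
  simp only [entropyPower, shannonEntropy, diffEntropy, negMulLog, hsol, neg_mul, integral_neg,
    finrank_euclideanSpace_fin]

/-- Concavity of the Shannon entropy power along the heat flow on `ℝⁿ`. -/
theorem entropyPower_concave (n : ℕ) (hn : 1 ≤ n)
    (f : EuclideanSpace ℝ (Fin n) → ℝ)
    (hf_cont : Continuous f) (hf_nonneg : ∀ x, 0 ≤ f x)
    (hf_supp : HasCompactSupport f)
    (hf_int : ∫ x, f x = 1) :
    ∀ t₁ t₂ : ℝ, 0 < t₁ → t₁ ≤ t₂ → ∀ l : ℝ, 0 ≤ l → l ≤ 1 →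
      l * entropyPower n f t₁ + (1 - l) * entropyPower n f t₂ ≤
        entropyPower n f (l * t₁ + (1 - l) * t₂) := by
  have : Nonempty (Fin n) := Fin.pos_iff_nonempty.1 hn
  have hf2 : Integrable fun x => ‖x‖ ^ 2 * f x :=
    (by fun_prop : Continuous fun x => ‖x‖ ^ 2 * f x).integrable_of_hasCompactSupport
      hf_supp.mul_left
  intro t₁ t₂ ht₁ ht₁₂ l hl0 hl1
  simpa only [entropyPower_eq, smul_eq_mul] using
    (entropyPower_concave_general hf_nonneg hf_int hf2).2 ht₁ (ht₁.trans_le ht₁₂) hl0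
      (sub_nonneg.2 hl1) (add_sub_cancel l 1)
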